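/- (Corollary 1.) Let (X, U, W, f) be a control system, G, H ⊆ X safe sets, let C*_G, C*_H and C*_{G∩H} be n.m.p. safety controllers for Safety(G), Safety(H) and Safety(G ∩ H) respectively. Then: (a) C*_{G∩H} is a sub-controller of the product C*_G ⊗ C*_H, and (b) every nonblocking sub-controller C of C*_G ⊗ C*_H satisfies C ⊑ C*_{G∩H}. Hence C*_{G∩H} is the largest nonblocking sub-controller of C*_G ⊗ C*_H. -/

import Mathlib

/-! Safety is inherited by sub-controllers, whose finite paths are also paths of the larger
controller, and is monotone in the safe set. Hence the n.m.p. controller for `G ∩ H` is safe for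
both `G` and `H`, so lies below both n.m.p. controllers; conversely a nonblocking sub-controller
of the product is safe for both `G` and `H`, so lies below the n.m.p. controller for `G ∩ H`. -/

/-- The domain of a state-feedback controller: states where it allows some input. -/
def ctrlDom {X U : Type*} (C : X → Set U) : Set X := {x | (C x).Nonempty}

/-- `ρ 0, ρ 1, …, ρ k` is a finite `C`-path: each step follows the dynamics `f`
under some control input allowed by `C` and some disturbance. -/
def IsFinPath {X U W : Type*} (f : X → U → W → X) (C : X → Set U) (k : ℕ) (ρ : ℕ → X) : Prop :=
  ∀ i < k, ∃ u ∈ C (ρ i), ∃ w : W, ρ (i + 1) = f (ρ i) u w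

/-- `C` is a safety controller for `Safety(G)`: every state on every finite
`C`-path starting in `dom C` lies in `G`. -/
def IsSafetyController {X U W : Type*} (f : X → U → W → X) (C : X → Set U) (G : Set X) : Prop :=
  ∀ (ρ : ℕ → X) (k : ℕ), ρ 0 ∈ ctrlDom C → IsFinPath f C k ρ → ∀ i ≤ k, ρ i ∈ G

/-- `C` is nonblocking: allowed inputs keep the system inside `dom C`
under every disturbance. -/
def Nonblocking {X U W : Type*} (f : X → U → W → X) (C : X → Set U) : Prop :=
  ∀ x ∈ ctrlDom C, ∀ u ∈ C x, ∀ w : W, f x u w ∈ ctrlDom C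

/-- `C` is the nonblocking, maximally permissive (n.m.p.) safety controller for
`Safety(G)`: it is a nonblocking safety controller and a super-controller of every
nonblocking safety controller for `Safety(G)`. -/
def IsNMPSafetyController {X U W : Type*} (f : X → U → W → X) (C : X → Set U) (G : Set X) : Prop :=
  Nonblocking f C ∧ IsSafetyController f C G ∧
    ∀ C' : X → Set U, Nonblocking f C' → IsSafetyController f C' G → ∀ x, C' x ⊆ C x

theorem IsSafetyController.of_sub {X U W : Type*} {f : X → U → W → X} {C C' : X → Set U}
    {G : Set X} (h : IsSafetyController f C G) (hsub : ∀ x, C' x ⊆ C x) :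
    IsSafetyController f C' G := by
  intro ρ k h0 hρ
  refine h ρ k (h0.mono (hsub _)) fun i hi => ?_
  obtain ⟨u, hu, w, hw⟩ := hρ i hi
  exact ⟨u, hsub _ hu, w, hw⟩

/-- Corollary 1: the n.m.p. controller for `Safety(G ∩ H)` is a
sub-controller of the product of the n.m.p. controllers for `Safety(G)` and
`Safety(H)`, and it is a super-controller of every nonblocking sub-controller of that
product; i.e., it is the largest nonblocking sub-controller of the product. -/
theorem nmp_intersection_is_largest_nonblocking_sub
    {X U W : Type*} [Nonempty X] [Nonempty U] [Nonempty W]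
    (f : X → U → W → X) (G H : Set X) (CG CH CGH : X → Set U)
    (hG : IsNMPSafetyController f CG G) (hH : IsNMPSafetyController f CH H)
    (hGH : IsNMPSafetyController f CGH (G ∩ H)) :
    (∀ x, CGH x ⊆ CG x ∩ CH x) ∧
    (∀ C : X → Set U, Nonblocking f C → (∀ x, C x ⊆ CG x ∩ CH x) →
      ∀ x, C x ⊆ CGH x) := by
  obtain ⟨nbG, safeG, maxG⟩ := hG
  obtain ⟨nbH, safeH, maxH⟩ := hH
  obtain ⟨nbGH, safeGH, maxGH⟩ := hGH
  refine ⟨fun x u hu => ⟨?_, ?_⟩, fun C nbC hC => maxGH C nbC ?_⟩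
  · exact maxG CGH nbGH (fun ρ k h0 hρ i hi => (safeGH ρ k h0 hρ i hi).1) x hu
  · exact maxH CGH nbGH (fun ρ k h0 hρ i hi => (safeGH ρ k h0 hρ i hi).2) x hu
  · intro ρ k h0 hρ i hi
    exact ⟨safeG.of_sub (fun x u hu => (hC x hu).1) ρ k h0 hρ i hi,
      safeH.of_sub (fun x u hu => (hC x hu).2) ρ k h0 hρ i hi⟩
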